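/- If L₁ and L₂ are regular languages over a finite alphabet Σ with sc(Lᵢ) = nᵢ (i = 1, 2), then L₁ ∪ L₂ can be recognized by an incomplete DFA with at most n₁·n₂ + n₁ + n₂ states. Moreover, for any relatively prime integers n₁, n₂ ≥ 2 (with Σ having at least two symbols) there exist regular languages L₁, L₂ with sc(Lᵢ) = nᵢ such that sc(L₁ ∪ L₂) = n₁·n₂ + n₁ + n₂. -/

import Mathlib

/-- An incomplete DFA over alphabet `α` with state type `σ`:
the transition function is a partial function, modelled as `Option`-valued. -/
structure IDFA (α : Type) (σ : Type) where
  /-- The (partial) transition function. -/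
  step : σ → α → Option σ
  /-- The start state. -/
  start : σ
  /-- The set of accepting states. -/
  accept : Set σ

namespace IDFA

variable {α σ : Type}

/-- The extended (partial) transition function on words. -/
def evalFrom (A : IDFA α σ) (q : σ) (w : List α) : Option σ :=
  w.foldl (fun oq a => oq.bind fun p => A.step p a) (some q)

/-- Running the automaton from the start state. -/
def eval (A : IDFA α σ) (w : List α) : Option σ :=
  A.evalFrom A.start w

/-- The language recognized by an incomplete DFA: words on which the run is
defined and ends in an accepting state. -/
def accepts (A : IDFA α σ) : Set (List α) :=
  {w | ∃ q ∈ A.accept, A.eval w = some q}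

/-- `#tr(A)`: the number of (defined) transitions of `A`. -/
noncomputable def trCount (A : IDFA α σ) : ℕ :=
  {p : σ × α | (A.step p.1 p.2).isSome}.ncard

/-- `#tr(A, b)`: the number of `b`-transitions of `A`. -/
noncomputable def trCountOn (A : IDFA α σ) (b : α) : ℕ :=
  {q : σ | (A.step q b).isSome}.ncard

/-- An incomplete DFA is connected if every state is reachable from the start state. -/
def Connected (A : IDFA α σ) : Prop :=
  ∀ q : σ, ∃ w : List α, A.evalFrom A.start w = some q

end IDFA

/-- A language is regular iff it is recognized by some incomplete DFA with
finitely many states. -/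
def IsRegularLang {α : Type} (L : Set (List α)) : Prop :=
  ∃ (σ : Type) (_ : Finite σ) (A : IDFA α σ), A.accepts = L

/-- `tc(L)`: the transition complexity of `L`, i.e. the minimal number of
transitions of any incomplete DFA recognizing `L`. -/
noncomputable def tc {α : Type} (L : Set (List α)) : ℕ :=
  sInf {n | ∃ (σ : Type) (_ : Finite σ) (A : IDFA α σ), A.accepts = L ∧ A.trCount = n}

/-- `tc_b(L)`: the `b`-transition complexity of `L`, i.e. the minimal number of
`b`-transitions of any incomplete DFA recognizing `L`. -/
noncomputable def tcOn {α : Type} (L : Set (List α)) (b : α) : ℕ :=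
  sInf {n | ∃ (σ : Type) (_ : Finite σ) (A : IDFA α σ), A.accepts = L ∧ A.trCountOn b = n}

/-- `sc(L)`: the (incomplete-DFA) state complexity of `L`, i.e. the number of
states of a minimal incomplete DFA recognizing `L`. -/
noncomputable def sc {α : Type} (L : Set (List α)) : ℕ :=
  sInf {n | ∃ (σ : Type) (_ : Finite σ) (A : IDFA α σ), A.accepts = L ∧ Nat.card σ = n}

/-!
The completion of an incomplete DFA adds an absorbing rejecting state `none`. Running two
completions in parallel recognizes the union, and there the pair `(none, none)` rejects every word,
so it can be deleted again: this leaves `(n₁ + 1) * (n₂ + 1) - 1` states.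

For tightness, take cycles of coprime lengths on a letter `a`, started and accepting at `0`, such
that any other letter kills state `0` and fixes the rest. By the Chinese remainder theorem powers
of `a` reach every pair of live states, and one further letter then kills either component alone.
Powers of `a` also separate the pairs: if the first components differ, some power brings one of
them to `0` while the second component of the other pair is not at `0`.
-/

namespace IDFA

variable {α σ τ : Type}

/-- The complete DFA obtained from an incomplete one by sending every undefined transition to an
additional rejecting state `none`. -/
def completion (A : IDFA α σ) : DFA α (Option σ) where
  step x a := x.bind fun q => A.step q a
  start := some A.start
  accept := {x | ∃ q ∈ A.accept, x = some q}

theorem accepts_completion (A : IDFA α σ) : A.completion.accepts = A.accepts := rfl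

theorem evalFrom_completion_none (A : IDFA α σ) (w : List α) :
    A.completion.evalFrom none w = none := by
  induction w with
  | nil => rfl
  | cons _ _ ih => exact ih

theorem acceptsFrom_completion_none (A : IDFA α σ) : A.completion.acceptsFrom none = 0 := by
  ext w
  rw [DFA.mem_acceptsFrom, evalFrom_completion_none]
  simp [completion, Language.notMem_zero]

theorem accepts_union_completion (A : IDFA α σ) (B : IDFA α τ) :
    (A.completion.union B.completion).accepts = A.accepts ∪ B.accepts := by
  rw [DFA.accepts_union, accepts_completion, accepts_completion]
  rfl

open Classical in
/-- The incomplete DFA obtained from a complete one by deleting a state `s` together with all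
transitions into it; meant for an `s` from which no word is accepted. -/
noncomputable def removeSink {S : Type} (M : DFA α S) (s : S) (hs : M.start ≠ s) :
    IDFA α {q // q ≠ s} where
  step q a := (Equiv.optionSubtypeNe s).symm (M.step q a)
  start := ⟨M.start, hs⟩
  accept := {q | ↑q ∈ M.accept}

open Classical in
theorem completion_removeSink {S : Type} {M : DFA α S} {s : S} (hs : M.start ≠ s)
    (hstep : ∀ a, M.step s a = s) (hreject : s ∉ M.accept) :
    (removeSink M s hs).completion = DFA.reindex (Equiv.optionSubtypeNe s).symm M := by
  rw [DFA.mk.injEq]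
  refine ⟨?_, ?_, ?_⟩
  · funext x a
    cases x <;> simp [completion, removeSink, hstep]
  · simp [completion, removeSink, hs]
  · ext x
    obtain _ | ⟨q, hq⟩ := x
    · simp [completion, hreject]
    · simpa [completion, removeSink] using fun _ => hq

theorem accepts_removeSink {S : Type} {M : DFA α S} {s : S} (hs : M.start ≠ s)
    (hstep : ∀ a, M.step s a = s) (hreject : s ∉ M.accept) :
    (removeSink M s hs).accepts = M.accepts := by
  classical
  rw [← accepts_completion, completion_removeSink hs hstep hreject, DFA.accepts_reindex]

/-- The parallel product of two incomplete DFAs, in which either component, but not both, may have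
come to a halt. -/
noncomputable def union (A : IDFA α σ) (B : IDFA α τ) :
    IDFA α {p : Option σ × Option τ // p ≠ (none, none)} :=
  removeSink (A.completion.union B.completion) (none, none) (by simp [completion])

theorem accepts_union (A : IDFA α σ) (B : IDFA α τ) :
    (A.union B).accepts = A.accepts ∪ B.accepts := by
  rw [union, accepts_removeSink _ (fun _ => rfl) (by simp [completion]), accepts_union_completion]

theorem card_subtype_ne_none_none [Finite σ] [Finite τ] :
    Nat.card {p : Option σ × Option τ // p ≠ (none, none)} =
      Nat.card σ * Nat.card τ + Nat.card σ + Nat.card τ := by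
  classical
  have h := Nat.card_congr (Equiv.optionSubtypeNe ((none, none) : Option σ × Option τ))
  rw [Finite.card_option, Nat.card_prod, Finite.card_option, Finite.card_option] at h
  linarith

theorem sc_accepts_le [Finite σ] (A : IDFA α σ) : sc A.accepts ≤ Nat.card σ :=
  Nat.sInf_le ⟨σ, inferInstance, A, rfl, rfl⟩

theorem sc_union_accepts_le [Finite σ] [Finite τ] (A : IDFA α σ) (B : IDFA α τ) :
    sc (A.accepts ∪ B.accepts) ≤ Nat.card σ * Nat.card τ + Nat.card σ + Nat.card τ := by
  rw [← accepts_union, ← card_subtype_ne_none_none]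
  exact sc_accepts_le _

theorem isRegularLang_accepts [Finite σ] (A : IDFA α σ) : IsRegularLang A.accepts :=
  ⟨σ, inferInstance, A, rfl⟩

end IDFA

theorem IsRegularLang.exists_card_eq_sc {α : Type} {L : Set (List α)} (hL : IsRegularLang L) :
    ∃ (σ : Type) (_ : Finite σ) (A : IDFA α σ), A.accepts = L ∧ Nat.card σ = sc L := by
  obtain ⟨σ, hσ, A, hA⟩ := hL
  exact Nat.sInf_mem (s := {n | ∃ (σ : Type) (_ : Finite σ) (A : IDFA α σ),
    A.accepts = L ∧ Nat.card σ = n}) ⟨_, σ, hσ, A, hA, rfl⟩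

theorem IsRegularLang.exists_accepts_eq_union {α : Type} {L₁ L₂ : Set (List α)}
    (h₁ : IsRegularLang L₁) (h₂ : IsRegularLang L₂) :
    ∃ (σ : Type) (_ : Finite σ) (A : IDFA α σ),
      A.accepts = L₁ ∪ L₂ ∧ Nat.card σ = sc L₁ * sc L₂ + sc L₁ + sc L₂ := by
  obtain ⟨σ, _, A, rfl, hσ⟩ := h₁.exists_card_eq_sc
  obtain ⟨τ, _, B, rfl, hτ⟩ := h₂.exists_card_eq_sc
  exact ⟨_, inferInstance, A.union B, A.accepts_union B,
    by rw [IDFA.card_subtype_ne_none_none, hσ, hτ]⟩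

namespace IDFA

variable {α σ τ : Type}

theorem card_le_sc_add_one {S : Type*} {M : DFA α S} {L : Set (List α)} (hM : M.accepts = L)
    (hL : IsRegularLang L)
    (hreach : ∀ q, M.acceptsFrom q = 0 ∨ ∃ w, M.eval w = q)
    (hsep : Function.Injective M.acceptsFrom) :
    Nat.card S ≤ sc L + 1 := by
  obtain ⟨τ, _, B, hB, hτ⟩ := hL.exists_card_eq_sc
  -- A reachable state accepts a left quotient of `L`, which `B` also accepts from some state.
  have hquot : ∀ q, ∃ x, B.completion.acceptsFrom x = M.acceptsFrom q := by
    intro q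
    obtain hq | ⟨w, rfl⟩ := hreach q
    · exact ⟨none, by rw [acceptsFrom_completion_none, hq]⟩
    · refine ⟨B.completion.eval w, ?_⟩
      rw [← Language.leftQuotient_accepts_apply, ← Language.leftQuotient_accepts_apply,
        accepts_completion, hB, hM]
  choose f hf using hquot
  have hinj : Function.Injective f := fun p q hpq => hsep (by rw [← hf p, ← hf q, hpq])
  calc Nat.card S ≤ Nat.card (Option τ) := Nat.card_le_card_of_injective f hinj
    _ = sc L + 1 := by rw [Finite.card_option, hτ]

theorem sc_accepts_eq [Finite σ] (A : IDFA α σ) (hconn : A.Connected)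
    (hsep : Function.Injective A.completion.acceptsFrom) : sc A.accepts = Nat.card σ := by
  refine le_antisymm (sc_accepts_le A) ?_
  have hreach : ∀ x, A.completion.acceptsFrom x = 0 ∨ ∃ w, A.completion.eval w = x
    | none => .inl A.acceptsFrom_completion_none
    | some q => .inr (hconn q)
  have hcard := card_le_sc_add_one A.accepts_completion A.isRegularLang_accepts hreach hsep
  rw [Finite.card_option] at hcard
  exact Nat.le_of_succ_le_succ hcard

theorem eval_dfa_union.{u} {S T : Type u} (M : DFA α S) (N : DFA α T) (w : List α) :
    (M.union N).eval w = (M.eval w, N.eval w) := by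
  induction w using List.reverseRecOn with
  | nil => rfl
  | append_singleton w a ih => simp [ih]

theorem sc_union_accepts_eq [Finite σ] [Finite τ] (A : IDFA α σ) (B : IDFA α τ)
    (hreach : ∀ x y, (x, y) ≠ (none, none) →
      ∃ w, A.completion.eval w = x ∧ B.completion.eval w = y)
    (hsep : Function.Injective (A.completion.union B.completion).acceptsFrom) :
    sc (A.accepts ∪ B.accepts) = Nat.card σ * Nat.card τ + Nat.card σ + Nat.card τ := by
  refine le_antisymm (sc_union_accepts_le A B) ?_
  have hreach' : ∀ p, (A.completion.union B.completion).acceptsFrom p = 0 ∨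
      ∃ w, (A.completion.union B.completion).eval w = p := by
    rintro ⟨x, y⟩
    by_cases hxy : (x, y) = (none, none)
    · left
      rw [hxy, DFA.acceptsFrom_union, acceptsFrom_completion_none, acceptsFrom_completion_none,
        add_zero]
    · obtain ⟨w, rfl, rfl⟩ := hreach x y hxy
      exact .inr ⟨w, eval_dfa_union ..⟩
  have hregular : IsRegularLang (A.accepts ∪ B.accepts) :=
    A.accepts_union B ▸ (A.union B).isRegularLang_accepts
  have hcard := card_le_sc_add_one (accepts_union_completion A B) hregular hreach' hsep
  rw [Nat.card_prod, Finite.card_option, Finite.card_option] at hcard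
  linarith

theorem exists_natCast_eq_and_natCast_eq {m n : ℕ} [NeZero m] [NeZero n] (hmn : m.Coprime n)
    (i : ZMod m) (j : ZMod n) : ∃ k : ℕ, (k : ZMod m) = i ∧ (k : ZMod n) = j := by
  obtain ⟨z, hz⟩ := (ZMod.chineseRemainder hmn).surjective (i, j)
  rw [← ZMod.natCast_zmod_val z, map_natCast] at hz
  exact ⟨z.val, congrArg Prod.fst hz, congrArg Prod.snd hz⟩

open Classical in
/-- The witness automaton for tightness: the letter `a` rotates the cycle `ZMod n`, whose start
and only accepting state is `0`; every other letter is undefined at `0` and fixes the other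
states. -/
noncomputable def cycle (a : α) (n : ℕ) : IDFA α (ZMod n) where
  step i c := if c = a then some (i + 1) else if i = 0 then none else some i
  start := 0
  accept := {0}

section cycle

variable (a : α) {m n : ℕ}

theorem evalFrom_cycle_replicate (i : ZMod n) (k : ℕ) :
    (cycle a n).completion.evalFrom (some i) (List.replicate k a) = some (i + k) := by
  induction k generalizing i with
  | zero => simp
  | succ k ih =>
    have hstep : (cycle a n).completion.step (some i) a = some (i + 1) := by
      simp [completion, cycle]
    rw [List.replicate_succ, DFA.evalFrom_cons, hstep, ih, Nat.cast_succ, add_assoc, add_comm 1]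

theorem eval_cycle_replicate (k : ℕ) :
    (cycle a n).completion.eval (List.replicate k a) = some (k : ZMod n) := by
  rw [← zero_add (k : ZMod n)]
  exact evalFrom_cycle_replicate a 0 k

theorem replicate_mem_acceptsFrom_cycle {x : Option (ZMod n)} {k : ℕ} :
    List.replicate k a ∈ (cycle a n).completion.acceptsFrom x ↔ x = some (-(k : ZMod n)) := by
  cases x with
  | none => simp [acceptsFrom_completion_none, Language.notMem_zero]
  | some i =>
    rw [DFA.mem_acceptsFrom, evalFrom_cycle_replicate]
    simp [completion, cycle, eq_neg_iff_add_eq_zero]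

theorem acceptsFrom_cycle_injective [NeZero n] :
    Function.Injective (cycle a n).completion.acceptsFrom := by
  intro x y hxy
  refine Option.ext fun i => ?_
  have hi : i = -(((-i).val : ℕ) : ZMod n) := by simp
  rw [hi, ← replicate_mem_acceptsFrom_cycle a, hxy, replicate_mem_acceptsFrom_cycle]

theorem connected_cycle [NeZero n] : (cycle a n).Connected := fun i =>
  ⟨List.replicate i.val a, (eval_cycle_replicate a i.val).trans (by rw [ZMod.natCast_zmod_val])⟩

theorem sc_accepts_cycle [NeZero n] : sc (cycle a n).accepts = n := by
  rw [sc_accepts_eq _ (connected_cycle a) (acceptsFrom_cycle_injective a), Nat.card_zmod]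

theorem exists_eval_cycle_eq_none_and_eq_some [NeZero m] [NeZero n] [Nontrivial (ZMod n)]
    {a b : α} (hab : a ≠ b) (hmn : m.Coprime n) (j : ZMod n) :
    ∃ w, (cycle a m).completion.eval w = none ∧ (cycle a n).completion.eval w = some j := by
  obtain ⟨k, hkm, hkn⟩ := exists_natCast_eq_and_natCast_eq hmn 0 1
  have hdead : (cycle a m).completion.eval (List.replicate k a ++ [b]) = none := by
    rw [DFA.eval_append_singleton, eval_cycle_replicate, hkm]
    simp [completion, cycle, hab.symm]
  have hlive : (cycle a n).completion.eval (List.replicate k a ++ [b]) = some 1 := by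
    rw [DFA.eval_append_singleton, eval_cycle_replicate, hkn]
    simp [completion, cycle, hab.symm]
  refine ⟨List.replicate k a ++ [b] ++ List.replicate (j - 1).val a, ?_, ?_⟩
  · rw [DFA.eval, DFA.evalFrom_of_append, ← DFA.eval, hdead, evalFrom_completion_none]
  · rw [DFA.eval, DFA.evalFrom_of_append, ← DFA.eval, hlive, evalFrom_cycle_replicate,
      ZMod.natCast_zmod_val, add_sub_cancel]

theorem exists_eval_cycle_eq_and_eq [NeZero m] [NeZero n] [Nontrivial (ZMod m)]
    [Nontrivial (ZMod n)] {a b : α} (hab : a ≠ b) (hmn : m.Coprime n) :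
    ∀ (x : Option (ZMod m)) (y : Option (ZMod n)), (x, y) ≠ (none, none) →
      ∃ w, (cycle a m).completion.eval w = x ∧ (cycle a n).completion.eval w = y
  | none, none, hne => absurd rfl hne
  | none, some j, _ => exists_eval_cycle_eq_none_and_eq_some hab hmn j
  | some i, none, _ => by
    simpa only [and_comm] using exists_eval_cycle_eq_none_and_eq_some hab hmn.symm i
  | some i, some j, _ => by
    obtain ⟨k, hki, hkj⟩ := exists_natCast_eq_and_natCast_eq hmn i j
    exact ⟨List.replicate k a, by rw [eval_cycle_replicate, hki],
      by rw [eval_cycle_replicate, hkj]⟩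

theorem eq_some_of_acceptsFrom_cycle_add_le [NeZero m] [NeZero n] [Nontrivial (ZMod n)]
    (hmn : m.Coprime n) {x x' : Option (ZMod m)} {y y' : Option (ZMod n)}
    (hle : (cycle a m).completion.acceptsFrom x + (cycle a n).completion.acceptsFrom y ≤
      (cycle a m).completion.acceptsFrom x' + (cycle a n).completion.acceptsFrom y')
    {i : ZMod m} (hx : x = some i) : x' = some i := by
  obtain ⟨j, hj⟩ : ∃ j, y' ≠ some j := by
    by_contra! hall
    exact zero_ne_one (Option.some.inj ((hall 0).symm.trans (hall 1)))
  obtain ⟨k, hki, hkj⟩ := exists_natCast_eq_and_natCast_eq hmn (-i) (-j)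
  have hmem : List.replicate k a ∈ (cycle a m).completion.acceptsFrom x := by
    rw [replicate_mem_acceptsFrom_cycle, hki, neg_neg, hx]
  have hmem' : List.replicate k a ∈ (cycle a m).completion.acceptsFrom x' +
      (cycle a n).completion.acceptsFrom y' := hle (Or.inl hmem)
  rw [Language.mem_add, replicate_mem_acceptsFrom_cycle, replicate_mem_acceptsFrom_cycle, hki, hkj,
    neg_neg, neg_neg] at hmem'
  exact hmem'.resolve_right hj

theorem eq_of_acceptsFrom_cycle_add_eq [NeZero m] [NeZero n] [Nontrivial (ZMod n)]
    (hmn : m.Coprime n) {x x' : Option (ZMod m)} {y y' : Option (ZMod n)}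
    (heq : (cycle a m).completion.acceptsFrom x + (cycle a n).completion.acceptsFrom y =
      (cycle a m).completion.acceptsFrom x' + (cycle a n).completion.acceptsFrom y') :
    x = x' :=
  Option.ext fun _ => ⟨eq_some_of_acceptsFrom_cycle_add_le a hmn heq.le,
    eq_some_of_acceptsFrom_cycle_add_le a hmn heq.ge⟩

theorem acceptsFrom_union_cycle_injective [NeZero m] [NeZero n] [Nontrivial (ZMod m)]
    [Nontrivial (ZMod n)] (hmn : m.Coprime n) :
    Function.Injective ((cycle a m).completion.union (cycle a n).completion).acceptsFrom := by
  rintro ⟨x, y⟩ ⟨x', y'⟩ heq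
  rw [DFA.acceptsFrom_union, DFA.acceptsFrom_union] at heq
  have hx : x = x' := eq_of_acceptsFrom_cycle_add_eq a hmn heq
  have hy : y = y' := eq_of_acceptsFrom_cycle_add_eq a hmn.symm (by simpa only [add_comm] using heq)
  rw [hx, hy]

theorem sc_union_accepts_cycle [NeZero m] [NeZero n] [Nontrivial (ZMod m)] [Nontrivial (ZMod n)]
    {a b : α} (hab : a ≠ b) (hmn : m.Coprime n) :
    sc ((cycle a m).accepts ∪ (cycle a n).accepts) = m * n + m + n := by
  simpa only [Nat.card_zmod] using sc_union_accepts_eq (cycle a m) (cycle a n)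
    (exists_eval_cycle_eq_and_eq hab hmn) (acceptsFrom_union_cycle_injective a hmn)

end cycle

end IDFA

theorem sc_union_bound_and_tight_general {α : Type} :
    (∀ L₁ L₂ : Set (List α), IsRegularLang L₁ → IsRegularLang L₂ →
      ∃ (σ : Type) (_ : Finite σ) (A : IDFA α σ),
        A.accepts = L₁ ∪ L₂ ∧
        Nat.card σ ≤ sc L₁ * sc L₂ + sc L₁ + sc L₂) ∧
    (Nontrivial α → ∀ n₁ n₂ : ℕ, 2 ≤ n₁ → 2 ≤ n₂ → Nat.Coprime n₁ n₂ →
      ∃ L₁ L₂ : Set (List α), IsRegularLang L₁ ∧ IsRegularLang L₂ ∧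
        sc L₁ = n₁ ∧ sc L₂ = n₂ ∧
        sc (L₁ ∪ L₂) = n₁ * n₂ + n₁ + n₂) := by
  refine ⟨fun L₁ L₂ h₁ h₂ => ?_, fun _ n₁ n₂ h₁ h₂ hcop => ?_⟩
  · obtain ⟨σ, hσ, A, hA, hcard⟩ := h₁.exists_accepts_eq_union h₂
    exact ⟨σ, hσ, A, hA, hcard.le⟩
  · obtain ⟨a, b, hab⟩ := exists_pair_ne α
    have : NeZero n₁ := ⟨by omega⟩
    have : NeZero n₂ := ⟨by omega⟩
    have : Fact (1 < n₁) := ⟨h₁⟩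
    have : Fact (1 < n₂) := ⟨h₂⟩
    exact ⟨(IDFA.cycle a n₁).accepts, (IDFA.cycle a n₂).accepts,
      IDFA.isRegularLang_accepts _, IDFA.isRegularLang_accepts _,
      IDFA.sc_accepts_cycle a, IDFA.sc_accepts_cycle a, IDFA.sc_union_accepts_cycle hab hcop⟩

/-- the state complexity of union of incomplete DFAs is at most
`n₁n₂ + n₁ + n₂`, and this bound is tight for relatively prime `n₁, n₂ ≥ 2`. -/
theorem sc_union_bound_and_tight {α : Type} [Finite α] :
    (∀ L₁ L₂ : Set (List α), IsRegularLang L₁ → IsRegularLang L₂ →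
      ∃ (σ : Type) (_ : Finite σ) (A : IDFA α σ),
        A.accepts = L₁ ∪ L₂ ∧
        Nat.card σ ≤ sc L₁ * sc L₂ + sc L₁ + sc L₂) ∧
    (2 ≤ Nat.card α → ∀ n₁ n₂ : ℕ, 2 ≤ n₁ → 2 ≤ n₂ → Nat.Coprime n₁ n₂ →
      ∃ L₁ L₂ : Set (List α), IsRegularLang L₁ ∧ IsRegularLang L₂ ∧
        sc L₁ = n₁ ∧ sc L₂ = n₂ ∧
        sc (L₁ ∪ L₂) = n₁ * n₂ + n₁ + n₂) :=
  ⟨sc_union_bound_and_tight_general.1, fun hα =>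
    sc_union_bound_and_tight_general.2 (Finite.one_lt_card_iff_nontrivial.1 hα)⟩
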